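/- arXiv:1505.06390 — 2 statements merged into one kernel-verified Lean document; each statement's English description precedes it below -/
import Mathlib

section
/- Let P be a smooth solution of the polarized Gowdy wave equation satisfying the integrability condition ∫₀^{2π} ∂τP(0,θ) ∂θP(0,θ) dθ = 0, and let ℓ ∈ ℝ. Then there exists a unique smooth function λ : ℝ → ℝ → ℝ, 2π-periodic in θ, such that λ(0,0) = ℓ, ∂τλ = (∂τP)² + e^{-2τ}(∂θP)², and ∂θλ = 2 ∂τP ∂θP everywhere. -/
open Real

/-!
The wave equation `∂ττP = c(τ) ∂θθP` makes the 1-form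
`((∂τP)² + c (∂θP)²) dτ + 2 ∂τP ∂θP dθ` closed, so it has a primitive `λ` on the plane, unique up
to a constant. Since the form is `T`-periodic in `θ`, the difference `λ(τ, θ + T) - λ(τ, θ)` is
constant; it is the integral of the form over the circle `τ = 0`, which the integrability
condition makes zero.
-/

open Function

section PartialDerivatives

variable {𝕜 E : Type*} [NontriviallyNormedField 𝕜] [NormedAddCommGroup E] [NormedSpace 𝕜 E]
  {f : 𝕜 → 𝕜 → E} {x y : 𝕜} {m n : WithTop ℕ∞}

lemma hasDerivAt_fst_of_hasFDerivAt_uncurry {L : 𝕜 × 𝕜 →L[𝕜] E}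
    (h : HasFDerivAt (uncurry f) L (x, y)) : HasDerivAt (fun s => f s y) (L (1, 0)) x :=
  h.comp_hasDerivAt (f := fun s => (s, y)) x ((hasDerivAt_id x).prodMk (hasDerivAt_const x y))

lemma hasDerivAt_snd_of_hasFDerivAt_uncurry {L : 𝕜 × 𝕜 →L[𝕜] E}
    (h : HasFDerivAt (uncurry f) L (x, y)) : HasDerivAt (f x) (L (0, 1)) y :=
  h.comp_hasDerivAt y ((hasDerivAt_const y x).prodMk (hasDerivAt_id y))

lemma hasDerivAt_fst_of_differentiableAt_uncurry
    (hf : DifferentiableAt 𝕜 (uncurry f) (x, y)) :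
    HasDerivAt (fun s => f s y) (deriv (fun s => f s y) x) x :=
  (hasDerivAt_fst_of_hasFDerivAt_uncurry hf.hasFDerivAt).differentiableAt.hasDerivAt

lemma hasDerivAt_snd_of_differentiableAt_uncurry
    (hf : DifferentiableAt 𝕜 (uncurry f) (x, y)) :
    HasDerivAt (f x) (deriv (f x) y) y :=
  (hasDerivAt_snd_of_hasFDerivAt_uncurry hf.hasFDerivAt).differentiableAt.hasDerivAt

lemma deriv_fst_eq_fderiv_uncurry (hf : DifferentiableAt 𝕜 (uncurry f) (x, y)) :
    deriv (fun s => f s y) x = fderiv 𝕜 (uncurry f) (x, y) (1, 0) :=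
  (hasDerivAt_fst_of_hasFDerivAt_uncurry hf.hasFDerivAt).deriv

lemma deriv_snd_eq_fderiv_uncurry (hf : DifferentiableAt 𝕜 (uncurry f) (x, y)) :
    deriv (f x) y = fderiv 𝕜 (uncurry f) (x, y) (0, 1) :=
  (hasDerivAt_snd_of_hasFDerivAt_uncurry hf.hasFDerivAt).deriv

lemma fderiv_uncurry_apply {p : 𝕜 × 𝕜} (hf : DifferentiableAt 𝕜 (uncurry f) p) (v : 𝕜 × 𝕜) :
    fderiv 𝕜 (uncurry f) p v =
      v.1 • deriv (fun s => f s p.2) p.1 + v.2 • deriv (f p.1) p.2 := by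
  have hv : v = v.1 • (1, 0) + v.2 • (0, 1) := by simp
  rw [deriv_fst_eq_fderiv_uncurry hf, deriv_snd_eq_fderiv_uncurry hf, ← map_smul, ← map_smul,
    ← map_add, ← hv]

lemma contDiff_uncurry_deriv_fst (hf : ContDiff 𝕜 n (uncurry f)) (hmn : m + 1 ≤ n) :
    ContDiff 𝕜 m (uncurry fun x y => deriv (fun s => f s y) x) := by
  have hd : Differentiable 𝕜 (uncurry f) :=
    (hf.of_le (le_add_self.trans hmn)).differentiable one_ne_zero
  simp only [deriv_fst_eq_fderiv_uncurry (hd _)]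
  exact (hf.fderiv_right hmn).clm_apply contDiff_const

lemma contDiff_uncurry_deriv_snd (hf : ContDiff 𝕜 n (uncurry f)) (hmn : m + 1 ≤ n) :
    ContDiff 𝕜 m (uncurry fun x y => deriv (f x) y) := by
  have hd : Differentiable 𝕜 (uncurry f) :=
    (hf.of_le (le_add_self.trans hmn)).differentiable one_ne_zero
  simp only [deriv_snd_eq_fderiv_uncurry (hd _)]
  exact (hf.fderiv_right hmn).clm_apply contDiff_const

lemma deriv_deriv_comm [IsRCLikeNormedField 𝕜] (hf : ContDiff 𝕜 2 (uncurry f)) (x y : 𝕜) :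
    deriv (fun t => deriv (fun s => f s t) x) y = deriv (fun s => deriv (f s) y) x := by
  have hd : Differentiable 𝕜 (uncurry f) := hf.differentiable two_ne_zero
  have hd' : Differentiable 𝕜 (fderiv 𝕜 (uncurry f)) :=
    (hf.fderiv_right (m := 1) (by norm_num)).differentiable one_ne_zero
  have deriv_fderiv_apply {γ : 𝕜 → 𝕜 × 𝕜} {γ' : 𝕜 × 𝕜} {t : 𝕜} (hγ : HasDerivAt γ γ' t)
      (v : 𝕜 × 𝕜) : deriv (fun s => fderiv 𝕜 (uncurry f) (γ s) v) t =
        fderiv 𝕜 (fderiv 𝕜 (uncurry f)) (γ t) γ' v :=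
    (((ContinuousLinearMap.apply 𝕜 E v).hasFDerivAt.comp _
      (hd' (γ t)).hasFDerivAt).comp_hasDerivAt t hγ).deriv
  simp only [deriv_fst_eq_fderiv_uncurry (hd _), deriv_snd_eq_fderiv_uncurry (hd _)]
  rw [deriv_fderiv_apply ((hasDerivAt_const y x).prodMk (hasDerivAt_id' y)),
    deriv_fderiv_apply ((hasDerivAt_id' x).prodMk (hasDerivAt_const x y))]
  exact hf.contDiffAt.isSymmSndFDerivAt (by simp) _ _

lemma periodic_deriv_fst {T : 𝕜} (hf : ∀ x, Periodic (f x) T) (x : 𝕜) :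
    Periodic (fun y => deriv (fun s => f s y) x) T := fun y => by
  simp only [hf _ y]

lemma periodic_deriv {g : 𝕜 → E} {T : 𝕜} (hg : Periodic g T) : Periodic (deriv g) T := fun y => by
  rw [← deriv_comp_add_const, hg.funext]

end PartialDerivatives

section Potential

variable {E : Type*} [NormedAddCommGroup E] [NormedSpace ℝ E] {A B f g : ℝ → ℝ → E} {T : ℝ}

/-- `f` is a primitive of the 1-form `A dx + B dy` on the plane, expressed through its partial
derivatives rather than its Fréchet derivative. -/
structure IsPotential (f A B : ℝ → ℝ → E) : Prop where
  hasDerivAt_fst : ∀ x y, HasDerivAt (fun s => f s y) (A x y) x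
  hasDerivAt_snd : ∀ x y, HasDerivAt (f x) (B x y) y

lemma isPotential_iff_deriv (hf : Differentiable ℝ (uncurry f)) :
    IsPotential f A B ↔
      (∀ x y, deriv (fun s => f s y) x = A x y) ∧ ∀ x y, deriv (f x) y = B x y where
  mp h := ⟨fun x y => (h.hasDerivAt_fst x y).deriv, fun x y => (h.hasDerivAt_snd x y).deriv⟩
  mpr h := ⟨fun x y => h.1 x y ▸ hasDerivAt_fst_of_differentiableAt_uncurry (hf (x, y)),
    fun x y => h.2 x y ▸ hasDerivAt_snd_of_differentiableAt_uncurry (hf (x, y))⟩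

namespace IsPotential

lemma add_const (h : IsPotential f A B) (v : E) : IsPotential (fun x y => f x y + v) A B where
  hasDerivAt_fst x y := (h.hasDerivAt_fst x y).add_const v
  hasDerivAt_snd x y := (h.hasDerivAt_snd x y).add_const v

lemma eq_of_apply_eq (hf : IsPotential f A B) (hg : IsPotential g A B) {x₀ y₀ : ℝ}
    (h₀ : f x₀ y₀ = g x₀ y₀) : f = g := by
  have hfst (x y : ℝ) : HasDerivAt (fun s => f s y - g s y) 0 x := by
    simpa using (hf.hasDerivAt_fst x y).fun_sub (hg.hasDerivAt_fst x y)
  have hsnd (x y : ℝ) : HasDerivAt (fun t => f x t - g x t) 0 y := by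
    simpa using (hf.hasDerivAt_snd x y).fun_sub (hg.hasDerivAt_snd x y)
  ext x y
  refine sub_eq_zero.1 ?_
  calc f x y - g x y = f x₀ y - g x₀ y :=
        is_const_of_deriv_eq_zero (fun s => (hfst s y).differentiableAt)
          (fun s => (hfst s y).deriv) x x₀
    _ = f x₀ y₀ - g x₀ y₀ :=
        is_const_of_deriv_eq_zero (fun t => (hsnd x₀ t).differentiableAt)
          (fun t => (hsnd x₀ t).deriv) y y₀
    _ = 0 := sub_eq_zero.2 h₀

lemma comp_add_period (h : IsPotential f A B) (hA : ∀ x, Periodic (A x) T)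
    (hB : ∀ x, Periodic (B x) T) : IsPotential (fun x y => f x (y + T)) A B where
  hasDerivAt_fst x y := hA x y ▸ h.hasDerivAt_fst x (y + T)
  hasDerivAt_snd x y := hB x y ▸ (h.hasDerivAt_snd x (y + T)).comp_add_const y T

lemma periodic [CompleteSpace E] (h : IsPotential f A B) (hA : ∀ x, Periodic (A x) T)
    (hB : ∀ x, Periodic (B x) T) {x₀ : ℝ} (hcont : Continuous (B x₀))
    (hint : ∫ y in (0 : ℝ)..T, B x₀ y = 0) (x : ℝ) : Periodic (f x) T := by
  have hperiod : f x₀ T - f x₀ 0 = 0 := by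
    rw [← intervalIntegral.integral_eq_sub_of_hasDerivAt (fun y _ => h.hasDerivAt_snd x₀ y)
      (hcont.intervalIntegrable 0 T), hint]
  have hshift : (fun x y => f x (y + T)) = f :=
    (h.comp_add_period hA hB).eq_of_apply_eq h (x₀ := x₀) (y₀ := 0)
      (by simpa only [zero_add] using sub_eq_zero.1 hperiod)
  exact congrFun₂ hshift x

end IsPotential

variable [CompleteSpace E] {k : ℕ∞}

lemma exists_contDiff_isPotential (hk : k ≠ 0) (hA : ContDiff ℝ k (uncurry A))
    (hB : ContDiff ℝ k (uncurry B))
    (hclosed : ∀ x y, deriv (A x) y = deriv (fun s => B s y) x) :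
    ∃ f : ℝ → ℝ → E, ContDiff ℝ (k + 1) (uncurry f) ∧ IsPotential f A B := by
  have hk' : (k : WithTop ℕ∞) ≠ 0 := by exact_mod_cast hk
  let ω (p : ℝ × ℝ) : ℝ × ℝ →L[ℝ] E :=
    (ContinuousLinearMap.fst ℝ ℝ ℝ).smulRight (uncurry A p) +
      (ContinuousLinearMap.snd ℝ ℝ ℝ).smulRight (uncurry B p)
  have hω : ContDiff ℝ k ω := (contDiff_const.smulRight hA).add (contDiff_const.smulRight hB)
  have hωd : Differentiable ℝ ω := hω.differentiable hk'
  have hAd : Differentiable ℝ (uncurry A) := hA.differentiable hk'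
  have hBd : Differentiable ℝ (uncurry B) := hB.differentiable hk'
  have fderiv_ω (p v w : ℝ × ℝ) : fderiv ℝ ω p v w =
      w.1 • fderiv ℝ (uncurry A) p v + w.2 • fderiv ℝ (uncurry B) p v := by
    have happly := (hωd p).hasFDerivAt.clm_apply (hasFDerivAt_const w p)
    have hcomb := ((hAd p).hasFDerivAt.const_smul w.1).add ((hBd p).hasFDerivAt.const_smul w.2)
    simpa using DFunLike.congr_fun (happly.unique hcomb) v
  have fderiv_ω_symm (p v w : ℝ × ℝ) : fderiv ℝ ω p v w = fderiv ℝ ω p w v := by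
    simp only [fderiv_ω, fderiv_uncurry_apply (hAd p), fderiv_uncurry_apply (hBd p), hclosed]
    module
  obtain ⟨F, hF⟩ := convex_univ.exists_forall_hasFDerivAt_of_fderiv_symmetric isOpen_univ
    hωd.differentiableOn fun p _ => fderiv_ω_symm p
  replace hF (p : ℝ × ℝ) : HasFDerivAt F (ω p) p := hF p (Set.mem_univ p)
  have hF_contDiff : ContDiff ℝ (k + 1) F := by
    refine contDiff_succ_iff_fderiv.2 ⟨fun p => (hF p).differentiableAt, by simp, ?_⟩
    rwa [show fderiv ℝ F = ω from funext fun p => (hF p).fderiv]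
  refine ⟨curry F, hF_contDiff, fun x y => ?_, fun x y => ?_⟩
  · simpa [ω] using hasDerivAt_fst_of_hasFDerivAt_uncurry (f := curry F) (hF (x, y))
  · simpa [ω] using hasDerivAt_snd_of_hasFDerivAt_uncurry (f := curry F) (hF (x, y))

theorem existsUnique_periodic_isPotential (hk : k ≠ 0) (hA : ContDiff ℝ k (uncurry A))
    (hB : ContDiff ℝ k (uncurry B))
    (hclosed : ∀ x y, deriv (A x) y = deriv (fun s => B s y) x)
    (hA_per : ∀ x, Periodic (A x) T) (hB_per : ∀ x, Periodic (B x) T) (x₀ y₀ : ℝ)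
    (hint : ∫ y in (0 : ℝ)..T, B x₀ y = 0) (v : E) :
    ∃! f : ℝ → ℝ → E, ContDiff ℝ (k + 1) (uncurry f) ∧ (∀ x, Periodic (f x) T) ∧
      f x₀ y₀ = v ∧ IsPotential f A B := by
  obtain ⟨f, hf, hpot⟩ := exists_contDiff_isPotential hk hA hB hclosed
  have hpot' := hpot.add_const (v - f x₀ y₀)
  refine ⟨fun x y => f x y + (v - f x₀ y₀), ⟨hf.add contDiff_const, ?_, ?_, hpot'⟩, ?_⟩
  · exact hpot'.periodic hA_per hB_per (hB.continuous.uncurry_left x₀) hint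
  · exact add_sub_cancel _ _
  · rintro g ⟨-, -, hg₀, hg⟩
    exact hg.eq_of_apply_eq hpot' (hg₀.trans (add_sub_cancel _ _).symm)

end Potential

section Wave

variable {c : ℝ → ℝ} {P : ℝ → ℝ → ℝ} {T : ℝ}

/-- Twice the energy density of a wave `P` solving `∂ττP = c(τ) ∂θθP`; in the Gowdy case
`c τ = e^{-2τ}` it is the prescribed value of `∂τλ`. -/
noncomputable def waveEnergy (c : ℝ → ℝ) (P : ℝ → ℝ → ℝ) (τ θ : ℝ) : ℝ :=
  deriv (fun s => P s θ) τ ^ 2 + c τ * deriv (P τ) θ ^ 2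

/-- Twice the momentum density of `P` (up to the usual sign); in the Gowdy case it is the
prescribed value of `∂θλ`. -/
noncomputable def waveMomentum (P : ℝ → ℝ → ℝ) (τ θ : ℝ) : ℝ :=
  2 * deriv (fun s => P s θ) τ * deriv (P τ) θ

lemma contDiff_waveEnergy {n : WithTop ℕ∞} (hc : ContDiff ℝ n c)
    (hP : ContDiff ℝ (n + 1) (uncurry P)) : ContDiff ℝ n (uncurry (waveEnergy c P)) :=
  ((contDiff_uncurry_deriv_fst hP le_rfl).pow 2).add
    ((hc.comp contDiff_fst).mul ((contDiff_uncurry_deriv_snd hP le_rfl).pow 2))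

lemma contDiff_waveMomentum {n : WithTop ℕ∞} (hP : ContDiff ℝ (n + 1) (uncurry P)) :
    ContDiff ℝ n (uncurry (waveMomentum P)) :=
  (contDiff_const.mul (contDiff_uncurry_deriv_fst hP le_rfl)).mul
    (contDiff_uncurry_deriv_snd hP le_rfl)

lemma periodic_waveEnergy (hper : ∀ τ, Periodic (P τ) T) (τ : ℝ) :
    Periodic (waveEnergy c P τ) T := fun θ => by
  simp only [waveEnergy, periodic_deriv_fst hper τ θ, periodic_deriv (hper τ) θ]

lemma periodic_waveMomentum (hper : ∀ τ, Periodic (P τ) T) (τ : ℝ) :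
    Periodic (waveMomentum P τ) T := fun θ => by
  simp only [waveMomentum, periodic_deriv_fst hper τ θ, periodic_deriv (hper τ) θ]

lemma deriv_waveEnergy_eq_deriv_waveMomentum (hP : ContDiff ℝ 2 (uncurry P)) {τ θ : ℝ}
    (hwave : deriv (fun s => deriv (fun s' => P s' θ) s) τ = c τ * deriv (deriv (P τ)) θ) :
    deriv (waveEnergy c P τ) θ = deriv (fun s => waveMomentum P s θ) τ := by
  have hτ : Differentiable ℝ (uncurry fun τ θ => deriv (fun s => P s θ) τ) :=
    (contDiff_uncurry_deriv_fst (m := 1) hP (by norm_num)).differentiable one_ne_zero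
  have hθ : Differentiable ℝ (uncurry fun τ θ => deriv (P τ) θ) :=
    (contDiff_uncurry_deriv_snd (m := 1) hP (by norm_num)).differentiable one_ne_zero
  have henergy := ((hasDerivAt_snd_of_differentiableAt_uncurry (hτ (τ, θ))).fun_pow 2).fun_add
    (((hasDerivAt_snd_of_differentiableAt_uncurry (hθ (τ, θ))).fun_pow 2).const_mul (c τ))
  have hmomentum := ((hasDerivAt_fst_of_differentiableAt_uncurry (hτ (τ, θ))).const_mul 2).fun_mul
    (hasDerivAt_fst_of_differentiableAt_uncurry (hθ (τ, θ)))
  refine henergy.deriv.trans (Eq.trans ?_ hmomentum.deriv.symm)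
  rw [deriv_deriv_comm hP, hwave]
  ring

theorem polarized_gowdy_lambda_exists_unique_general {k : ℕ∞} (hk : k ≠ 0)
    (hc : ContDiff ℝ k c) (hP : ContDiff ℝ (k + 1) (uncurry P))
    (hper : ∀ τ, Periodic (P τ) T)
    (hwave : ∀ τ θ, deriv (fun s => deriv (fun s' => P s' θ) s) τ = c τ * deriv (deriv (P τ)) θ)
    (hint : ∫ θ in (0 : ℝ)..T, deriv (fun s => P s θ) 0 * deriv (P 0) θ = 0) (ℓ : ℝ) :
    ∃! lam : ℝ → ℝ → ℝ,
      ContDiff ℝ (k + 1) (uncurry lam) ∧ (∀ τ, Periodic (lam τ) T) ∧ lam 0 0 = ℓ ∧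
      (∀ τ θ, deriv (fun s => lam s θ) τ =
        deriv (fun s => P s θ) τ ^ 2 + c τ * deriv (P τ) θ ^ 2) ∧
      ∀ τ θ, deriv (lam τ) θ = 2 * deriv (fun s => P s θ) τ * deriv (P τ) θ := by
  have hk_one : (1 : WithTop ℕ∞) ≤ k := by exact_mod_cast Order.one_le_iff_ne_zero.2 hk
  have hP_two : ContDiff ℝ 2 (uncurry P) :=
    hP.of_le (one_add_one_eq_two.symm.le.trans (add_le_add_left hk_one 1))
  have hmomentum_int : ∫ θ in (0 : ℝ)..T, waveMomentum P 0 θ = 0 := by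
    simp only [waveMomentum, mul_assoc, intervalIntegral.integral_const_mul, hint, mul_zero]
  refine (existsUnique_congr fun lam => and_congr_right fun hlam => ?_).1
    (existsUnique_periodic_isPotential hk (contDiff_waveEnergy hc hP) (contDiff_waveMomentum hP)
      (fun τ θ => deriv_waveEnergy_eq_deriv_waveMomentum hP_two (hwave τ θ))
      (periodic_waveEnergy hper) (periodic_waveMomentum hper) 0 0 hmomentum_int ℓ)
  rw [isPotential_iff_deriv (hlam.differentiable (by simp))]
  rfl

end Wave

/-- Given a smooth solution `P` of the polarized Gowdy wave equation satisfying the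
integrability condition, and a constant `ℓ`, there is a unique smooth 2π-periodic
`λ` with `λ(0,0) = ℓ` solving `∂τλ = (∂τP)² + e^{-2τ}(∂θP)²` and `∂θλ = 2 ∂τP ∂θP`. -/
theorem polarized_gowdy_lambda_exists_unique
    (P : ℝ → ℝ → ℝ)
    (hsmooth : ContDiff ℝ (⊤ : ℕ∞) (fun p : ℝ × ℝ => P p.1 p.2))
    (hper : ∀ τ θ : ℝ, P τ (θ + 2 * π) = P τ θ)
    (hwave : ∀ τ θ : ℝ, deriv (fun s => deriv (fun s' => P s' θ) s) τ
      = Real.exp (-2 * τ) * deriv (deriv (P τ)) θ)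
    (hint : (∫ θ in (0:ℝ)..(2 * π), deriv (fun s => P s θ) 0 * deriv (P 0) θ) = 0)
    (ℓ : ℝ) :
    ∃! lam : ℝ → ℝ → ℝ,
      ContDiff ℝ (⊤ : ℕ∞) (fun p : ℝ × ℝ => lam p.1 p.2) ∧
      (∀ τ θ : ℝ, lam τ (θ + 2 * π) = lam τ θ) ∧
      lam 0 0 = ℓ ∧
      (∀ τ θ : ℝ, deriv (fun s => lam s θ) τ
        = (deriv (fun s => P s θ) τ) ^ 2 + Real.exp (-2 * τ) * (deriv (P τ) θ) ^ 2) ∧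
      (∀ τ θ : ℝ, deriv (lam τ) θ = 2 * deriv (fun s => P s θ) τ * deriv (P τ) θ) :=
  polarized_gowdy_lambda_exists_unique_general (k := ⊤) ENat.top_ne_zero
    (c := fun τ => Real.exp (-2 * τ)) (contDiff_const.mul contDiff_id).exp
    hsmooth hper hwave hint ℓ
end

section
/- Let P be a smooth solution of the polarized Gowdy wave equation and let λ be a smooth 2π-periodic-in-θ function satisfying ∂τλ = (∂τP)² + e^{-2τ}(∂θP)² and ∂θλ = 2 ∂τP ∂θP. Let v be the asymptotic velocity of P, i.e. the smooth function with |∂τP(τ,θ) - v(θ)| ≤ C e^{-2τ} for τ ≥ 0. Then there exists a constant C' > 0 such that |∂τλ(τ,θ) - v(θ)²| ≤ C' e^{-2τ} for all τ ≥ 0 and all θ; consequently there is a smooth 2π-periodic μ with |λ(τ,θ) - v(θ)²τ - μ(θ)| ≤ C' e^{-2τ} for all τ ≥ 0. -/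
open Real

/-!
Along the characteristics `dθ/dτ = ±e^{-τ}` the Riemann invariants `∂τP ± e^{-τ}∂θP` obey a
maximum principle, so `∂τ` of every `θ`-derivative of `P` is bounded. Hence every `∂θⁿP` grows at
most linearly, `∂τ²∂θⁿP = e^{-2τ}∂θⁿ⁺²P = O(e^{-τ})`, and `∂τ∂θⁿP` converges at rate `e^{-τ}` to
`v⁽ⁿ⁾`. In fact `∂θ²P = v''τ + O(1)` would force `∂τP - v` to be of size `|v''| τ e^{-2τ}`, so a
velocity attained at rate `e^{-2τ}` satisfies `v'' = 0` and, being periodic, is a constant `c`.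
Then `∂θP` converges to some smooth `φ`, whence `∂τλ → c²` and `∂θλ → 2cφ` exponentially, and `μ`
is the smooth function with `μ' = 2cφ`.
-/

namespace PolarizedGowdy

open Filter Topology Asymptotics Set Function MeasureTheory
open scoped ContDiff

/-- The derivative in the first variable `τ` of a function on the `(τ, θ)`-plane, written `∂τ`
below. It is the value of the total derivative on a basis vector, so it is meant for
differentiable functions only. -/
noncomputable def timeDeriv (u : ℝ × ℝ → ℝ) (p : ℝ × ℝ) : ℝ := fderiv ℝ u p (1, 0)

/-- The derivative in the second variable `θ`, written `∂θ` below; see `timeDeriv`. -/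
noncomputable def spaceDeriv (u : ℝ × ℝ → ℝ) (p : ℝ × ℝ) : ℝ := fderiv ℝ u p (0, 1)

local notation "∂τ" => timeDeriv
local notation "∂θ" => spaceDeriv

section Calculus

variable {u : ℝ × ℝ → ℝ} {p : ℝ × ℝ}

theorem hasDerivAt_time {τ θ : ℝ} (hu : DifferentiableAt ℝ u (τ, θ)) :
    HasDerivAt (fun t => u (t, θ)) (∂τ u (τ, θ)) τ :=
  hu.hasFDerivAt.comp_hasDerivAt (f := fun t => (t, θ)) τ
    ((hasDerivAt_id τ).prodMk (hasDerivAt_const τ θ))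

theorem hasDerivAt_space {τ θ : ℝ} (hu : DifferentiableAt ℝ u (τ, θ)) :
    HasDerivAt (fun x => u (τ, x)) (∂θ u (τ, θ)) θ :=
  hu.hasFDerivAt.comp_hasDerivAt (f := fun x => (τ, x)) θ
    ((hasDerivAt_const θ τ).prodMk (hasDerivAt_id θ))

theorem contDiff_timeDeriv (hu : ContDiff ℝ ∞ u) : ContDiff ℝ ∞ (∂τ u) :=
  (hu.fderiv_right (by simp)).clm_apply contDiff_const

theorem contDiff_spaceDeriv (hu : ContDiff ℝ ∞ u) : ContDiff ℝ ∞ (∂θ u) :=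
  (hu.fderiv_right (by simp)).clm_apply contDiff_const

theorem timeDeriv_spaceDeriv_comm (hu : ContDiff ℝ 2 u) : ∂τ (∂θ u) = ∂θ (∂τ u) := by
  ext p
  have hd : DifferentiableAt ℝ (fderiv ℝ u) p :=
    (hu.fderiv_right (m := 1) le_rfl).differentiable one_ne_zero p
  have fderiv_apply (e : ℝ × ℝ) :
      fderiv ℝ (fun q => fderiv ℝ u q e) p = (fderiv ℝ (fderiv ℝ u) p).flip e := by
    simp [fderiv_clm_apply hd (differentiableAt_const e)]
  calc ∂τ (∂θ u) p = fderiv ℝ (fderiv ℝ u) p (1, 0) (0, 1) :=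
        congrArg (· (1, 0)) (fderiv_apply (0, 1))
    _ = fderiv ℝ (fderiv ℝ u) p (0, 1) (1, 0) := hu.contDiffAt.isSymmSndFDerivAt (by simp) _ _
    _ = ∂θ (∂τ u) p := (congrArg (· (0, 1)) (fderiv_apply (1, 0))).symm

theorem periodic_timeDeriv {e : ℝ × ℝ} (hu : Periodic u e) : Periodic (∂τ u) e := fun p => by
  rw [timeDeriv, ← fderiv_comp_add_right, show (fun q => u (q + e)) = u from funext hu, timeDeriv]

theorem periodic_spaceDeriv {e : ℝ × ℝ} (hu : Periodic u e) : Periodic (∂θ u) e := fun p => by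
  rw [spaceDeriv, ← fderiv_comp_add_right, show (fun q => u (q + e)) = u from funext hu,
    spaceDeriv]

theorem timeDeriv_neg : ∂τ (-u) = -∂τ u := by
  ext p
  simp [timeDeriv, fderiv_neg]

theorem spaceDeriv_neg : ∂θ (-u) = -∂θ u := by
  ext p
  simp [spaceDeriv, fderiv_neg]

theorem hasFDerivAt_sub_mul_fst (hu : DifferentiableAt ℝ u p) (c : ℝ) :
    HasFDerivAt (fun q : ℝ × ℝ => u q - c * q.1)
      (fderiv ℝ u p - c • ContinuousLinearMap.fst ℝ ℝ ℝ) p :=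
  hu.hasFDerivAt.sub (hasFDerivAt_fst.const_mul c)

theorem timeDeriv_sub_mul_fst (hu : DifferentiableAt ℝ u p) (c : ℝ) :
    ∂τ (fun q => u q - c * q.1) p = ∂τ u p - c := by
  simp [timeDeriv, (hasFDerivAt_sub_mul_fst hu c).fderiv]

theorem spaceDeriv_sub_mul_fst (hu : DifferentiableAt ℝ u p) (c : ℝ) :
    ∂θ (fun q => u q - c * q.1) p = ∂θ u p := by
  simp [spaceDeriv, (hasFDerivAt_sub_mul_fst hu c).fderiv]

theorem periodic_slice {L : ℝ} (hu : Periodic u (0, L)) (τ : ℝ) :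
    Periodic (fun θ => u (τ, θ)) L := fun θ => by
  simpa using hu (τ, θ)

theorem exists_abs_slice_le {L : ℝ} (hu : Continuous u) (hper : Periodic u (0, L)) (hL : L ≠ 0)
    (τ : ℝ) : ∃ M, ∀ θ, |u (τ, θ)| ≤ M := by
  obtain ⟨M, hM⟩ := ((periodic_slice hper τ).isBounded_of_continuous hL
    (by fun_prop)).exists_norm_le
  exact ⟨M, fun θ => hM _ ⟨θ, rfl⟩⟩

end Calculus

section MaximumPrinciple

variable {u : ℝ × ℝ → ℝ} {p : ℝ × ℝ} {T L : ℝ}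

theorem exists_isMaxOn_strip (hu : Continuous u) (hper : Periodic u (0, L)) (hL : 0 < L)
    (hT : 0 ≤ T) : ∃ p ∈ Icc 0 T ×ˢ univ, IsMaxOn u (Icc 0 T ×ˢ univ) p := by
  obtain ⟨p, hp, hmax⟩ := (isCompact_Icc (a := 0) (b := T)).prod (isCompact_Icc (a := 0) (b := L))
    |>.exists_isMaxOn ⟨0, ⟨le_rfl, hT⟩, le_rfl, hL.le⟩ hu.continuousOn
  refine ⟨p, ⟨hp.1, mem_univ _⟩, fun q hq => ?_⟩
  obtain ⟨θ, hθ, heq⟩ := (periodic_slice hper q.1).exists_mem_Ico₀ hL q.2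
  calc u q = u (q.1, θ) := heq
    _ ≤ u p := hmax (show (q.1, θ) ∈ _ from ⟨hq.1, Ico_subset_Icc_self hθ⟩)

theorem fderiv_sub_nonpos_of_isMaxOn {s : Set (ℝ × ℝ)} {q : ℝ × ℝ} (hs : Convex ℝ s)
    (hu : DifferentiableAt ℝ u p) (hmax : IsMaxOn u s p) (hp : p ∈ s) (hq : q ∈ s) :
    fderiv ℝ u p (q - p) ≤ 0 :=
  hmax.localize.hasFDerivWithinAt_nonpos hu.hasFDerivAt.hasFDerivWithinAt
    (sub_mem_posTangentConeAt_of_segment_subset (hs.segment_subset hp hq))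

theorem timeDeriv_nonneg_of_isMaxOn_strip (hu : DifferentiableAt ℝ u p)
    (hmax : IsMaxOn u (Icc 0 T ×ˢ univ) p) (hp : p ∈ Icc 0 T ×ˢ univ) (hp0 : 0 < p.1) :
    0 ≤ ∂τ u p := by
  have hle := fderiv_sub_nonpos_of_isMaxOn (q := (0, p.2)) ((convex_Icc 0 T).prod convex_univ)
    hu hmax hp ⟨⟨le_rfl, hp0.le.trans hp.1.2⟩, mem_univ _⟩
  have hdir : ((0, p.2) - p : ℝ × ℝ) = -p.1 • (1, 0) := by ext <;> simp
  rw [hdir, map_smul, smul_eq_mul, neg_mul, neg_nonpos] at hle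
  exact nonneg_of_mul_nonneg_right hle hp0

theorem spaceDeriv_eq_zero_of_isMaxOn_strip (hu : DifferentiableAt ℝ u p)
    (hmax : IsMaxOn u (Icc 0 T ×ˢ univ) p) (hp : p ∈ Icc 0 T ×ˢ univ) : ∂θ u p = 0 :=
  IsLocalMax.hasDerivAt_eq_zero
    (Eventually.of_forall fun x => isMaxOn_iff.1 hmax (p.1, x) ⟨hp.1, mem_univ x⟩)
    (hasDerivAt_space hu)

theorem le_of_coupled_transport {ι : Type*} [Finite ι] {A b : ι → ℝ × ℝ → ℝ} {M : ℝ}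
    (hA : ∀ i, Differentiable ℝ (A i)) (hper : ∀ i, Periodic (A i) (0, L)) (hL : 0 < L)
    (htransport : ∀ i p, 0 ≤ p.1 → (∀ j, A j p ≤ A i p) → ∂τ (A i) p ≤ b i p * ∂θ (A i) p)
    (hinit : ∀ i θ, A i (0, θ) ≤ M) (i : ι) (hp : 0 ≤ p.1) : A i p ≤ M := by
  by_contra! hlt
  -- The penalty `ετ` excludes a maximum at a positive time, where `∂τ ≥ 0` and `∂θ = 0`.
  set ε := (A i p - M) / (p.1 + 1)
  have hε : 0 < ε := div_pos (sub_pos.2 hlt) (by linarith)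
  have hεp : ε * (p.1 + 1) = A i p - M := div_mul_cancel₀ _ (by linarith)
  let B : ι → ℝ × ℝ → ℝ := fun j q => A j q - ε * q.1
  have hB j : Continuous (B j) := (hA j).continuous.sub (by fun_prop)
  have hBper j : Periodic (B j) (0, L) := fun q => by simp [B, hper j q]
  choose m hm hmax using fun j => exists_isMaxOn_strip (hB j) (hBper j) hL hp
  have : Nonempty ι := ⟨i⟩
  obtain ⟨k, hk⟩ := Finite.exists_max fun j => B j (m j)
  have hlarge : M < B k (m k) := by
    have := (isMaxOn_iff.1 (hmax i) p ⟨⟨hp, le_rfl⟩, mem_univ _⟩).trans (hk i)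
    simp only [B] at this ⊢
    linarith
  have hpos : 0 < (m k).1 := (hm k).1.1.lt_of_ne fun h0 => by
    have hle := hinit k (m k).2
    rw [show ((0 : ℝ), (m k).2) = m k from Prod.ext h0 rfl] at hle
    simp only [B, ← h0, mul_zero, sub_zero] at hlarge
    linarith
  have htop j : A j (m k) ≤ A k (m k) := by
    have := (isMaxOn_iff.1 (hmax j) (m k) (hm k)).trans (hk j)
    simpa only [B, sub_le_sub_iff_right] using this
  have hBk : DifferentiableAt ℝ (B k) (m k) :=
    (hasFDerivAt_sub_mul_fst (hA k _) ε).differentiableAt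
  have hτ := timeDeriv_nonneg_of_isMaxOn_strip hBk (hmax k) (hm k) hpos
  have hθ := spaceDeriv_eq_zero_of_isMaxOn_strip hBk (hmax k) (hm k)
  rw [timeDeriv_sub_mul_fst (hA k _)] at hτ
  rw [spaceDeriv_sub_mul_fst (hA k _)] at hθ
  have := htransport k (m k) hpos.le htop
  rw [hθ, mul_zero] at this
  linarith

end MaximumPrinciple

section ExponentialConvergence

/-- The filter of the half-plane `τ ≥ 0`: a relation `F =O[future] g` holds with one constant for
all `τ ≥ 0` and all `θ`. -/
def future : Filter (ℝ × ℝ) := 𝓟 {p | 0 ≤ p.1}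

/-- `F(τ, θ)` converges to `f(θ)` at rate `e^{-aτ}`, uniformly in `τ ≥ 0` and `θ`. -/
def ExpConverges (a : ℝ) (F : ℝ × ℝ → ℝ) (f : ℝ → ℝ) : Prop :=
  (fun p => F p - f p.2) =O[future] fun p => exp (-a * p.1)

variable {a b : ℝ} {F G : ℝ × ℝ → ℝ} {f g : ℝ → ℝ}

theorem isBigO_future_iff {g : ℝ × ℝ → ℝ} :
    F =O[future] g ↔ ∃ K, ∀ p, 0 ≤ p.1 → |F p| ≤ K * |g p| :=
  isBigO_principal

theorem isBigO_future_of_le {g : ℝ × ℝ → ℝ} (h : ∀ p, 0 ≤ p.1 → |F p| ≤ |g p|) : F =O[future] g :=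
  isBigO_future_iff.2 ⟨1, by simpa only [one_mul] using h⟩

theorem expConverges_iff :
    ExpConverges a F f ↔ ∃ K, ∀ τ, 0 ≤ τ → ∀ θ, |F (τ, θ) - f θ| ≤ K * exp (-a * τ) := by
  simp only [ExpConverges, isBigO_future_iff, abs_exp, Prod.forall]
  exact exists_congr fun K => forall_congr' fun τ => forall_comm

theorem exp_isBigO_exp (hab : b ≤ a) :
    (fun p => exp (-a * p.1)) =O[future] fun p => exp (-b * p.1) :=
  isBigO_future_of_le fun p hp => by
    simp only [abs_exp, exp_le_exp]
    nlinarith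

theorem exp_isBigO_one (ha : 0 ≤ a) :
    (fun p => exp (-a * p.1)) =O[future] fun _ => (1 : ℝ) := by
  simpa using exp_isBigO_exp ha

theorem snd_isBigO_one {M : ℝ} (hf : ∀ θ, |f θ| ≤ M) :
    (fun p => f p.2) =O[future] fun _ => (1 : ℝ) :=
  isBigO_future_iff.2 ⟨M, fun p _ => by simpa using hf p.2⟩

theorem isBigO_one_add_of_timeDeriv (hF : Differentiable ℝ F) {M : ℝ} (h0 : ∀ θ, |F (0, θ)| ≤ M)
    (hderiv : ∂τ F =O[future] fun _ => (1 : ℝ)) : F =O[future] fun p => 1 + p.1 := by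
  obtain ⟨K, hK⟩ := isBigO_future_iff.1 hderiv
  refine isBigO_future_iff.2 ⟨max M K, fun ⟨τ, θ⟩ hτ => ?_⟩
  have hgrowth : |F (τ, θ) - F (0, θ)| ≤ K * (τ - 0) :=
    norm_image_sub_le_of_norm_deriv_le_segment' (f := fun t => F (t, θ))
      (fun t _ => (hasDerivAt_time (hF _)).hasDerivWithinAt)
      (fun t ht => by simpa using hK (t, θ) ht.1) τ (right_mem_Icc.2 hτ)
  calc |F (τ, θ)| ≤ |F (0, θ)| + |F (τ, θ) - F (0, θ)| := by
        simpa using abs_add_le (F (0, θ)) (F (τ, θ) - F (0, θ))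
    _ ≤ max M K + max M K * τ := by
        have := mul_le_mul_of_nonneg_right (le_max_right M K) hτ
        have := le_max_left M K
        have := h0 θ
        linarith
    _ = max M K * |1 + τ| := by rw [abs_of_nonneg (add_nonneg zero_le_one hτ)]; ring

theorem exists_limit_of_abs_deriv_le_exp {f f' : ℝ → ℝ} {K : ℝ} (ha : 0 < a)
    (hf : ∀ t, HasDerivAt f (f' t) t) (hf' : ∀ t, 0 ≤ t → |f' t| ≤ K * exp (-a * t)) :
    ∃ l, ∀ t, 0 ≤ t → |f t - l| ≤ K / a * exp (-a * t) := by
  have hexp t : IntegrableOn (fun s => K * exp (-a * s)) (Ioi t) :=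
    (integrableOn_exp_mul_Ioi (neg_lt_zero.2 ha) t).const_mul K
  have hbound t (ht : 0 ≤ t) : ∀ᵐ s ∂volume.restrict (Ioi t), ‖f' s‖ ≤ K * exp (-a * s) :=
    (ae_restrict_mem measurableSet_Ioi).mono fun s hs => hf' s (ht.trans (le_of_lt hs))
  have hmeas : Measurable f' := by
    simpa only [funext fun t => (hf t).deriv] using measurable_deriv f
  have hint t (ht : 0 ≤ t) : IntegrableOn f' (Ioi t) :=
    (hexp t).mono' hmeas.aestronglyMeasurable (hbound t ht)
  have hlim := tendsto_limUnder_of_hasDerivAt_of_integrableOn_Ioi (fun t _ => hf t) (hint 0 le_rfl)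
  refine ⟨limUnder atTop f, fun t ht => ?_⟩
  calc |f t - limUnder atTop f| = ‖∫ s in Ioi t, f' s‖ := by
        rw [integral_Ioi_of_hasDerivAt_of_tendsto' (fun s _ => hf s) (hint t ht) hlim,
          norm_eq_abs, abs_sub_comm]
    _ ≤ ∫ s in Ioi t, K * exp (-a * s) := norm_integral_le_of_norm_le (hexp t) (hbound t ht)
    _ = K / a * exp (-a * t) := by
        rw [integral_const_mul, integral_exp_mul_Ioi (neg_lt_zero.2 ha), neg_div_neg_eq]
        ring

theorem exists_expConverges (ha : 0 < a) (hF : Differentiable ℝ F)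
    (hderiv : ExpConverges a (∂τ F) fun _ => 0) : ∃ f, ExpConverges a F f := by
  obtain ⟨K, hK⟩ := expConverges_iff.1 hderiv
  choose f hf using fun θ => exists_limit_of_abs_deriv_le_exp ha
    (fun t => hasDerivAt_time (hF (t, θ))) (fun t ht => by simpa using hK t ht θ)
  exact ⟨f, expConverges_iff.2 ⟨K / a, fun τ hτ θ => hf θ τ hτ⟩⟩

namespace ExpConverges

theorem mono_rate (h : ExpConverges a F f) (hab : b ≤ a) : ExpConverges b F f :=
  h.trans (exp_isBigO_exp hab)

theorem tendstoUniformly (h : ExpConverges a F f) (ha : 0 < a) :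
    TendstoUniformly (fun τ θ => F (τ, θ)) f atTop := by
  obtain ⟨K, hK⟩ := expConverges_iff.1 h
  have hdecay : Tendsto (fun τ => K * exp (-a * τ)) atTop (𝓝 0) := by
    simpa using (tendsto_exp_atBot.comp
      (tendsto_id.const_mul_atTop_of_neg (neg_lt_zero.2 ha))).const_mul K
  refine Metric.tendstoUniformly_iff.2 fun ε hε => ?_
  filter_upwards [eventually_ge_atTop 0, hdecay.eventually_lt_const hε] with τ hτ hlt θ
  rw [dist_comm, dist_eq]
  exact (hK τ hτ θ).trans_lt hlt

theorem periodic_limit {L : ℝ} (h : ExpConverges a F f) (ha : 0 < a) (hF : Periodic F (0, L)) :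
    Periodic f L := fun θ => by
  have hlim := (h.tendstoUniformly ha).tendsto_at
  refine tendsto_nhds_unique (hlim (θ + L)) ((hlim θ).congr fun τ => ?_)
  exact (periodic_slice hF τ θ).symm

theorem hasDerivAt_limit (hf : ExpConverges a F f) (hg : ExpConverges b (∂θ F) g) (ha : 0 < a)
    (hb : 0 < b) (hF : Differentiable ℝ F) (θ : ℝ) : HasDerivAt f (g θ) θ :=
  hasDerivAt_of_tendstoUniformly (hg.tendstoUniformly hb)
    (Eventually.of_forall fun _ _ => hasDerivAt_space (hF _))
    (hf.tendstoUniformly ha).tendsto_at θ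

theorem isBigO_one {M : ℝ} (h : ExpConverges a F f) (ha : 0 ≤ a) (hf : ∀ θ, |f θ| ≤ M) :
    F =O[future] fun _ => (1 : ℝ) := by
  simpa using IsBigO.add (h.trans (exp_isBigO_one ha)) (snd_isBigO_one hf)

theorem mul {M : ℝ} (hFf : ExpConverges a F f) (hGg : ExpConverges a G g)
    (hG : G =O[future] fun _ => (1 : ℝ)) (hf : ∀ θ, |f θ| ≤ M) :
    ExpConverges a (fun p => F p * G p) fun θ => f θ * g θ := by
  have hFG : (fun p => (F p - f p.2) * G p) =O[future] fun p => exp (-a * p.1) := by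
    simpa using IsBigO.mul hFf hG
  have hfG : (fun p => f p.2 * (G p - g p.2)) =O[future] fun p => exp (-a * p.1) := by
    simpa using (snd_isBigO_one hf).mul hGg
  exact (hFG.add hfG).congr_left fun p => by ring

theorem contDiff_limit (hf : ExpConverges a F f) (ha : 0 < a) (hF : ContDiff ℝ ∞ F)
    (hderiv : ∀ k, ∃ g, ExpConverges a (∂θ^[k] F) g) : ContDiff ℝ ∞ f := by
  refine contDiff_infty.2 fun n => ?_
  induction n generalizing F f with
  | zero =>
    obtain ⟨g, hg⟩ := hderiv 1
    have hfg := hf.hasDerivAt_limit hg ha ha (hF.differentiable (by simp))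
    exact contDiff_zero.2 (continuous_iff_continuousAt.2 fun θ => (hfg θ).continuousAt)
  | succ n ih =>
    obtain ⟨g, hg⟩ := hderiv 1
    have hfg := hf.hasDerivAt_limit hg ha ha (hF.differentiable (by simp))
    push_cast
    refine contDiff_succ_iff_deriv.2 ⟨fun θ => (hfg θ).differentiableAt, by simp, ?_⟩
    rw [show deriv f = g from funext fun θ => (hfg θ).deriv]
    exact ih hg (contDiff_spaceDeriv hF) fun k => hderiv (k + 1)

end ExpConverges

end ExponentialConvergence

section Velocity

theorem eq_zero_of_mul_sq_le {w A B : ℝ} (h : ∀ t, 0 ≤ t → |w| * t ^ 2 ≤ A + B * t) : w = 0 := by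
  by_contra hw
  have hw0 : 0 < |w| := abs_pos.2 hw
  set t := (|A| + |B|) / |w| + 1 with ht
  have hwt : |w| * t = |A| + |B| + |w| := by rw [ht]; field_simp
  have ht1 : 1 ≤ t := le_add_of_nonneg_left (by positivity)
  have hle : A + B * t ≤ (|A| + |B|) * t := by
    nlinarith [le_abs_self A, le_abs_self B, abs_nonneg A]
  have := h t (by linarith)
  nlinarith

theorem eq_of_periodic_of_deriv_deriv_eq_zero {f f' : ℝ → ℝ} {L : ℝ} (hper : Periodic f L)
    (hL : 0 < L) (hf : ∀ x, HasDerivAt f (f' x) x) (hf' : ∀ x, HasDerivAt f' 0 x) (x y : ℝ) :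
    f x = f y := by
  have hconst : ∀ x y, f' x = f' y :=
    is_const_of_deriv_eq_zero (fun x => (hf' x).differentiableAt) fun x => (hf' x).deriv
  obtain ⟨ξ, -, hξ⟩ := exists_hasDerivAt_eq_zero hL
    (fun x _ => (hf x).continuousAt.continuousWithinAt) (by simpa using (hper 0).symm)
    fun x _ => hf x
  exact is_const_of_deriv_eq_zero (fun x => (hf x).differentiableAt)
    (fun x => by rw [(hf x).deriv, hconst x ξ, hξ]) x y

/-- With `e^{at}(h - v)` in place of `h`, the equation reads `k' = ak + wt + O(1)`, and a bounded
`k` excludes `w ≠ 0`. -/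
theorem eq_zero_of_deriv_eq_exp_mul_linear {h G : ℝ → ℝ} {a v w C K : ℝ}
    (hderiv : ∀ t, HasDerivAt h (exp (-a * t) * G t) t)
    (hh : ∀ t, 0 ≤ t → |h t - v| ≤ C * exp (-a * t)) (hG : ∀ t, 0 ≤ t → |G t - w * t| ≤ K) :
    w = 0 := by
  let k : ℝ → ℝ := fun t => exp (a * t) * (h t - v)
  have hexp t : exp (a * t) * exp (-a * t) = 1 := by rw [← exp_add]; simp
  have hk t (ht : 0 ≤ t) : |k t| ≤ C := by
    calc |k t| = exp (a * t) * |h t - v| := by rw [abs_mul, abs_exp]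
      _ ≤ exp (a * t) * (C * exp (-a * t)) := by gcongr; exact hh t ht
      _ = C := by linear_combination C * hexp t
  have hk' t : HasDerivAt (fun t => k t - w * (t ^ 2 / 2)) (a * k t + (G t - w * t)) t := by
    have hd := ((((hasDerivAt_id t).const_mul a).exp).mul ((hderiv t).sub_const v)).sub
      (((hasDerivAt_pow 2 t).div_const 2).const_mul w)
    refine hd.congr_deriv ?_
    simp only [id, k]
    linear_combination G t * hexp t
  have hbound t (ht : 0 ≤ t) : |a * k t + (G t - w * t)| ≤ |a| * C + K := by
    refine (abs_add_le _ _).trans (add_le_add ?_ (hG t ht))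
    rw [abs_mul]
    gcongr
    exact hk t ht
  refine eq_zero_of_mul_sq_le (A := 4 * C) (B := 2 * (|a| * C + K)) fun t ht => ?_
  have hmvt : |(k t - w * (t ^ 2 / 2)) - (k 0 - w * (0 ^ 2 / 2))| ≤ (|a| * C + K) * (t - 0) :=
    norm_image_sub_le_of_norm_deriv_le_segment' (f := fun t => k t - w * (t ^ 2 / 2))
      (fun s _ => (hk' s).hasDerivWithinAt)
      (fun s hs => hbound s hs.1) t (right_mem_Icc.2 ht)
  have hsplit : w * t ^ 2
      = 2 * (k t - k 0 - ((k t - w * (t ^ 2 / 2)) - (k 0 - w * (0 ^ 2 / 2)))) := by ring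
  calc |w| * t ^ 2 = |w * t ^ 2| := by rw [abs_mul, abs_sq]
    _ ≤ 2 * (|k t| + |k 0| + |(k t - w * (t ^ 2 / 2)) - (k 0 - w * (0 ^ 2 / 2))|) := by
      rw [hsplit, abs_mul, abs_two]
      gcongr
      exact (abs_sub _ _).trans (by gcongr; exact abs_sub _ _)
    _ ≤ 4 * C + 2 * (|a| * C + K) * t := by linarith [hk t ht, hk 0 le_rfl]

end Velocity

/-- Smooth solutions of the polarized Gowdy wave equation on `ℝ × S¹`, the circle being modelled
by `2π`-periodicity in the second variable. -/
structure IsGowdyWave (u : ℝ × ℝ → ℝ) : Prop where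
  contDiff : ContDiff ℝ ∞ u
  periodic : Periodic u (0, 2 * π)
  wave : ∀ p, ∂τ (∂τ u) p = exp (-2 * p.1) * ∂θ (∂θ u) p

/-- The Riemann invariants (`σ = ±1`) of the wave equation: up to lower order terms they are
constant along the characteristics `dθ/dτ = -σe^{-τ}`. -/
noncomputable def riemannInvariant (u : ℝ × ℝ → ℝ) (σ : ℤˣ) (p : ℝ × ℝ) : ℝ :=
  ∂τ u p + (σ : ℤ) * (exp (-p.1) * ∂θ u p)

namespace IsGowdyWave

variable {u : ℝ × ℝ → ℝ}

theorem differentiable (hu : IsGowdyWave u) : Differentiable ℝ u :=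
  hu.contDiff.differentiable (by simp)

theorem differentiable_timeDeriv (hu : IsGowdyWave u) : Differentiable ℝ (∂τ u) :=
  (contDiff_timeDeriv hu.contDiff).differentiable (by simp)

theorem timeDeriv_spaceDeriv (hu : IsGowdyWave u) : ∂τ (∂θ u) = ∂θ (∂τ u) :=
  timeDeriv_spaceDeriv_comm (contDiff_infty.1 hu.contDiff 2)

theorem neg (hu : IsGowdyWave u) : IsGowdyWave (-u) where
  contDiff := hu.contDiff.neg
  periodic p := congrArg Neg.neg (hu.periodic p)
  wave p := by simp only [timeDeriv_neg, spaceDeriv_neg, Pi.neg_apply, hu.wave, mul_neg]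

theorem spaceDeriv (hu : IsGowdyWave u) : IsGowdyWave (∂θ u) where
  contDiff := contDiff_spaceDeriv hu.contDiff
  periodic := periodic_spaceDeriv hu.periodic
  wave p := by
    have hdd : Differentiable ℝ (∂θ (∂θ u)) :=
      (contDiff_spaceDeriv (contDiff_spaceDeriv hu.contDiff)).differentiable (by simp)
    have hcomm : ∂τ (∂θ (∂τ u)) = ∂θ (∂τ (∂τ u)) := timeDeriv_spaceDeriv_comm
      (contDiff_infty.1 (contDiff_timeDeriv hu.contDiff) 2)
    have hwave : ∂τ (∂τ u) = fun q => exp (-2 * q.1) * ∂θ (∂θ u) q := funext hu.wave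
    have hd : Differentiable ℝ (∂τ (∂τ u)) :=
      (contDiff_timeDeriv (contDiff_timeDeriv hu.contDiff)).differentiable (by simp)
    rw [hu.timeDeriv_spaceDeriv, hcomm]
    refine (hasDerivAt_space (hd p)).unique ?_
    rw [hwave]
    exact (hasDerivAt_space (hdd p)).const_mul (exp (-2 * p.1))

theorem iterate_spaceDeriv (hu : IsGowdyWave u) (n : ℕ) : IsGowdyWave (∂θ^[n] u) := by
  induction n generalizing u with
  | zero => exact hu
  | succ _ ih => exact ih hu.spaceDeriv

theorem differentiable_riemannInvariant (hu : IsGowdyWave u) (σ : ℤˣ) :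
    Differentiable ℝ (riemannInvariant u σ) := by
  have := hu.differentiable_timeDeriv
  have := hu.spaceDeriv.differentiable
  unfold riemannInvariant
  fun_prop

theorem periodic_riemannInvariant (hu : IsGowdyWave u) (σ : ℤˣ) :
    Periodic (riemannInvariant u σ) (0, 2 * π) := fun p => by
  simp only [riemannInvariant, periodic_timeDeriv hu.periodic p,
    periodic_spaceDeriv hu.periodic p, Prod.fst_add, add_zero]

theorem timeDeriv_riemannInvariant (hu : IsGowdyWave u) (σ : ℤˣ) (p : ℝ × ℝ) :
    ∂τ (riemannInvariant u σ) p = (σ : ℤ) * exp (-p.1) * ∂θ (riemannInvariant u σ) p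
      - (σ : ℤ) * (exp (-p.1) * ∂θ u p) := by
  have hR := hu.differentiable_riemannInvariant σ p
  have hTd := hu.differentiable_timeDeriv p
  have hXd := hu.spaceDeriv.differentiable p
  have hτ := (hasDerivAt_time hR).unique ((hasDerivAt_time hTd).add
    (((hasDerivAt_neg p.1).exp.mul (hasDerivAt_time hXd)).const_mul ((σ : ℤ) : ℝ)))
  have hθ := (hasDerivAt_space hR).unique ((hasDerivAt_space hTd).add
    (((hasDerivAt_space hXd).const_mul (exp (-p.1))).const_mul ((σ : ℤ) : ℝ)))
  have hσ : ((σ : ℤ) : ℝ) * (σ : ℤ) = 1 := by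
    rcases Int.units_eq_one_or σ with rfl | rfl <;> simp
  have hexp : exp (-2 * p.1) = exp (-p.1) * exp (-p.1) := by rw [← exp_add]; ring_nf
  rw [hτ, hθ, hu.wave, hu.timeDeriv_spaceDeriv, hexp]
  linear_combination (-exp (-p.1) * exp (-p.1) * ∂θ (∂θ u) p) * hσ

theorem timeDeriv_le (hu : IsGowdyWave u) {M : ℝ}
    (hM : ∀ θ, |∂τ u (0, θ)| + |∂θ u (0, θ)| ≤ M) {p : ℝ × ℝ} (hp : 0 ≤ p.1) : ∂τ u p ≤ M := by
  have hle (σ : ℤˣ) : riemannInvariant u σ p ≤ M := by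
    refine le_of_coupled_transport (A := riemannInvariant u)
      (b := fun (σ : ℤˣ) p => ((σ : ℤ) : ℝ) * exp (-p.1))
      hu.differentiable_riemannInvariant hu.periodic_riemannInvariant two_pi_pos
      (fun σ q _ hmax => ?_) (fun σ θ => ?_) σ hp
    · have := hmax (-σ)
      simp only [riemannInvariant, Units.val_neg, Int.cast_neg] at this
      rw [hu.timeDeriv_riemannInvariant]
      linarith
    · refine le_trans (add_le_add (le_abs_self _) ?_) (hM θ)
      rcases Int.units_eq_one_or σ with rfl | rfl
      · simpa using le_abs_self (∂θ u (0, θ))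
      · simpa using neg_le_abs (∂θ u (0, θ))
  have hplus := hle 1
  have hminus := hle (-1)
  simp only [riemannInvariant, Units.val_one, Units.val_neg, Int.cast_one, Int.cast_neg]
    at hplus hminus
  linarith

theorem timeDeriv_isBigO_one (hu : IsGowdyWave u) : ∂τ u =O[future] fun _ => (1 : ℝ) := by
  obtain ⟨A, hA⟩ := exists_abs_slice_le hu.differentiable_timeDeriv.continuous
    (periodic_timeDeriv hu.periodic) two_pi_pos.ne' 0
  obtain ⟨B, hB⟩ := exists_abs_slice_le hu.spaceDeriv.differentiable.continuous
    (periodic_spaceDeriv hu.periodic) two_pi_pos.ne' 0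
  have hM θ : |∂τ u (0, θ)| + |∂θ u (0, θ)| ≤ A + B := add_le_add (hA θ) (hB θ)
  have hMneg θ : |∂τ (-u) (0, θ)| + |∂θ (-u) (0, θ)| ≤ A + B := by
    simpa only [timeDeriv_neg, spaceDeriv_neg, Pi.neg_apply, abs_neg] using hM θ
  refine isBigO_future_iff.2 ⟨A + B, fun p hp => ?_⟩
  have hlower := hu.neg.timeDeriv_le hMneg hp
  rw [timeDeriv_neg, Pi.neg_apply] at hlower
  simpa using abs_le'.2 ⟨hu.timeDeriv_le hM hp, hlower⟩

theorem isBigO_one_add (hu : IsGowdyWave u) : u =O[future] fun p => 1 + p.1 := by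
  obtain ⟨M, hM⟩ := exists_abs_slice_le hu.differentiable.continuous hu.periodic two_pi_pos.ne' 0
  exact isBigO_one_add_of_timeDeriv hu.differentiable hM hu.timeDeriv_isBigO_one

theorem exists_velocity (hu : IsGowdyWave u) : ∃ v, ExpConverges 1 (∂τ u) v := by
  refine exists_expConverges one_pos hu.differentiable_timeDeriv ?_
  have hexp : (fun p : ℝ × ℝ => exp (-2 * p.1) * (1 + p.1)) =O[future]
      fun p => exp (-1 * p.1) := isBigO_future_of_le fun p hp => by
    rw [abs_of_nonneg (by positivity), abs_exp]
    calc exp (-2 * p.1) * (1 + p.1) ≤ exp (-2 * p.1) * exp p.1 := by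
          gcongr
          linarith [add_one_le_exp p.1]
      _ = exp (-1 * p.1) := by rw [← exp_add]; ring_nf
  have hwave : ∂τ (∂τ u) =O[future] fun p => exp (-2 * p.1) * (1 + p.1) :=
    ((isBigO_refl _ _).mul hu.spaceDeriv.spaceDeriv.isBigO_one_add).congr_left
      fun p => (hu.wave p).symm
  simpa only [ExpConverges, sub_zero] using hwave.trans hexp

theorem exists_hasDerivAt_velocity (hu : IsGowdyWave u) {a : ℝ} {v : ℝ → ℝ} (ha : 0 < a)
    (hv : ExpConverges a (∂τ u) v) :
    ∃ w, ExpConverges 1 (∂τ (∂θ u)) w ∧ ∀ θ, HasDerivAt v (w θ) θ := by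
  obtain ⟨w, hw⟩ := hu.spaceDeriv.exists_velocity
  refine ⟨w, hw, hv.hasDerivAt_limit ?_ ha one_pos hu.differentiable_timeDeriv⟩
  exact hu.timeDeriv_spaceDeriv ▸ hw

theorem spaceDeriv_spaceDeriv_velocity_eq_zero (hu : IsGowdyWave u) {v w : ℝ → ℝ}
    (hv : ExpConverges 2 (∂τ u) v) (hw : ExpConverges 1 (∂τ (∂θ (∂θ u))) w) : w = 0 := by
  ext θ
  obtain ⟨C, hC⟩ := expConverges_iff.1 hv
  obtain ⟨K, hK⟩ := expConverges_iff.1 hw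
  have hdd := hu.spaceDeriv.spaceDeriv.differentiable
  obtain ⟨l, hl⟩ := exists_limit_of_abs_deriv_le_exp (f := fun t => ∂θ (∂θ u) (t, θ) - w θ * t)
    one_pos (fun t => (hasDerivAt_time (hdd _)).sub ((hasDerivAt_id t).const_mul (w θ)))
    (fun t ht => by simpa using hK t ht θ)
  refine eq_zero_of_deriv_eq_exp_mul_linear (a := 2) (h := fun t => ∂τ u (t, θ))
    (G := fun t => ∂θ (∂θ u) (t, θ)) (K := |K| + |l|) (fun t => ?_) (fun t ht => hC t ht θ)
    fun t ht => ?_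
  · exact hu.wave (t, θ) ▸ hasDerivAt_time (hu.differentiable_timeDeriv _)
  · have hKt : K / 1 * exp (-1 * t) ≤ |K| := by
      rw [div_one]
      calc K * exp (-1 * t) ≤ |K| * exp (-1 * t) := by gcongr; exact le_abs_self K
        _ ≤ |K| := mul_le_of_le_one_right (abs_nonneg K) (exp_le_one_iff.2 (by linarith))
    have := abs_add_le (∂θ (∂θ u) (t, θ) - w θ * t - l) l
    rw [sub_add_cancel] at this
    linarith [hl t ht]

theorem exists_velocity_eq_const (hu : IsGowdyWave u) {v : ℝ → ℝ}
    (hv : ExpConverges 2 (∂τ u) v) : ∃ c, v = fun _ => c := by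
  obtain ⟨v', hv', hderiv⟩ := hu.exists_hasDerivAt_velocity two_pos hv
  obtain ⟨v'', hv'', hderiv'⟩ := hu.spaceDeriv.exists_hasDerivAt_velocity one_pos hv'
  rw [hu.spaceDeriv_spaceDeriv_velocity_eq_zero hv hv''] at hderiv'
  have hper : Periodic v (2 * π) := hv.periodic_limit two_pos (periodic_timeDeriv hu.periodic)
  exact ⟨v 0, funext fun θ =>
    eq_of_periodic_of_deriv_deriv_eq_zero hper two_pi_pos hderiv hderiv' θ 0⟩

theorem timeDeriv_spaceDeriv_expConverges_zero (hu : IsGowdyWave u) {a c : ℝ} (ha : 0 < a)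
    (hc : ExpConverges a (∂τ u) fun _ => c) : ExpConverges 1 (∂τ (∂θ u)) fun _ => 0 := by
  obtain ⟨w, hw, hderiv⟩ := hu.exists_hasDerivAt_velocity ha hc
  rwa [show w = fun _ => 0 from funext fun θ => (hderiv θ).unique (hasDerivAt_const θ c)] at hw

theorem timeDeriv_iterate_expConverges_zero (hu : IsGowdyWave u)
    (h0 : ExpConverges 1 (∂τ u) fun _ => 0) (n : ℕ) :
    ExpConverges 1 (∂τ (∂θ^[n] u)) fun _ => 0 := by
  induction n generalizing u with
  | zero => exact h0
  | succ _ ih => exact ih hu.spaceDeriv (hu.timeDeriv_spaceDeriv_expConverges_zero one_pos h0)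

theorem exists_contDiff_limit (hu : IsGowdyWave u) (h0 : ExpConverges 1 (∂τ u) fun _ => 0) :
    ∃ φ, ContDiff ℝ ∞ φ ∧ ExpConverges 1 u φ := by
  have hlim n : ∃ f, ExpConverges 1 (∂θ^[n] u) f :=
    exists_expConverges one_pos (hu.iterate_spaceDeriv n).differentiable
      (hu.timeDeriv_iterate_expConverges_zero h0 n)
  obtain ⟨φ, hφ⟩ := hlim 0
  exact ⟨φ, hφ.contDiff_limit one_pos hu.contDiff hlim, hφ⟩

theorem exists_contDiff_spaceDeriv_limit (hu : IsGowdyWave u) {a c : ℝ} (ha : 0 < a)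
    (hc : ExpConverges a (∂τ u) fun _ => c) :
    ∃ φ, ContDiff ℝ ∞ φ ∧ ExpConverges 1 (∂θ u) φ :=
  hu.spaceDeriv.exists_contDiff_limit (hu.timeDeriv_spaceDeriv_expConverges_zero ha hc)

theorem spaceDeriv_isBigO_one (hu : IsGowdyWave u) {a c : ℝ} (ha : 0 < a)
    (hc : ExpConverges a (∂τ u) fun _ => c) : ∂θ u =O[future] fun _ => (1 : ℝ) := by
  obtain ⟨φ, hφ, hlim⟩ := hu.exists_contDiff_spaceDeriv_limit ha hc
  have hper := hlim.periodic_limit one_pos hu.spaceDeriv.periodic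
  obtain ⟨M, hM⟩ := (hper.isBounded_of_continuous two_pi_pos.ne' hφ.continuous).exists_norm_le
  exact hlim.isBigO_one zero_le_one fun θ => hM _ ⟨θ, rfl⟩

end IsGowdyWave

/-- A smooth polarized Gowdy metric on `ℝ × S¹`, given by its metric functions `P` and `λ`
(`lam`): the wave equation for `P` together with the constraint equations for `λ`. -/
structure IsGowdyMetric (P lam : ℝ × ℝ → ℝ) : Prop extends IsGowdyWave P where
  contDiff_lam : ContDiff ℝ ∞ lam
  periodic_lam : Periodic lam (0, 2 * π)
  timeDeriv_lam : ∀ p, ∂τ lam p = ∂τ P p ^ 2 + exp (-2 * p.1) * ∂θ P p ^ 2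
  spaceDeriv_lam : ∀ p, ∂θ lam p = 2 * ∂τ P p * ∂θ P p

namespace IsGowdyMetric

variable {P lam : ℝ × ℝ → ℝ} {c : ℝ} {φ : ℝ → ℝ}

theorem timeDeriv_lam_expConverges (h : IsGowdyMetric P lam)
    (hc : ExpConverges 2 (∂τ P) fun _ => c) : ExpConverges 2 (∂τ lam) fun _ => c ^ 2 := by
  have hkinetic := hc.mul hc h.timeDeriv_isBigO_one (M := |c|) fun _ => le_rfl
  have hθ := h.spaceDeriv_isBigO_one two_pos hc
  have hpotential : (fun p => exp (-2 * p.1) * (∂θ P p * ∂θ P p)) =O[future]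
      fun p => exp (-2 * p.1) := by
    simpa using (isBigO_refl (fun p : ℝ × ℝ => exp (-2 * p.1)) future).mul (hθ.mul hθ)
  exact (hkinetic.add hpotential).congr_left fun p => by rw [h.timeDeriv_lam]; ring

theorem spaceDeriv_lam_expConverges (h : IsGowdyMetric P lam)
    (hc : ExpConverges 1 (∂τ P) fun _ => c) (hφ : ExpConverges 1 (∂θ P) φ) :
    ExpConverges 1 (∂θ lam) fun θ => 2 * (c * φ θ) :=
  have hprod := hc.mul hφ (h.spaceDeriv_isBigO_one one_pos hc) (M := |c|) fun _ => le_rfl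
  (hprod.const_mul_left 2).congr_left
    fun p => by rw [h.spaceDeriv_lam]; ring

theorem exists_contDiff_lam_limit (h : IsGowdyMetric P lam)
    (hc : ExpConverges 2 (∂τ P) fun _ => c) :
    ∃ μ, ContDiff ℝ ∞ μ ∧ Periodic μ (2 * π) ∧
      ExpConverges 2 (fun p => lam p - c ^ 2 * p.1) μ := by
  obtain ⟨φ, hφ, hlim⟩ := h.exists_contDiff_spaceDeriv_limit two_pos hc
  have hlam : Differentiable ℝ lam := h.contDiff_lam.differentiable (by simp)
  have hF : Differentiable ℝ fun p => lam p - c ^ 2 * p.1 := by fun_prop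
  have htime : ExpConverges 2 (∂τ fun p => lam p - c ^ 2 * p.1) fun _ => 0 := by
    simpa only [ExpConverges, timeDeriv_sub_mul_fst (hlam _), sub_zero]
      using h.timeDeriv_lam_expConverges hc
  have hspace : ExpConverges 1 (∂θ fun p => lam p - c ^ 2 * p.1) fun θ => 2 * (c * φ θ) := by
    simpa only [ExpConverges, spaceDeriv_sub_mul_fst (hlam _)]
      using h.spaceDeriv_lam_expConverges (hc.mono_rate one_le_two) hlim
  obtain ⟨μ, hμ⟩ := exists_expConverges two_pos hF htime
  have hderiv : ∀ θ, HasDerivAt μ (2 * (c * φ θ)) θ :=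
    hμ.hasDerivAt_limit hspace two_pos one_pos hF
  refine ⟨μ, contDiff_infty_iff_deriv.2 ⟨fun θ => (hderiv θ).differentiableAt, ?_⟩,
    hμ.periodic_limit two_pos fun p => ?_, hμ⟩
  · rw [show deriv μ = fun θ => 2 * (c * φ θ) from funext fun θ => (hderiv θ).deriv]
    fun_prop
  · simp [h.periodic_lam p]

end IsGowdyMetric

theorem timeDeriv_uncurry {P : ℝ → ℝ → ℝ} (hP : Differentiable ℝ (uncurry P)) (τ θ : ℝ) :
    ∂τ (uncurry P) (τ, θ) = deriv (fun s => P s θ) τ :=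
  (hasDerivAt_time (hP _)).deriv.symm

theorem spaceDeriv_uncurry {P : ℝ → ℝ → ℝ} (hP : Differentiable ℝ (uncurry P)) (τ θ : ℝ) :
    ∂θ (uncurry P) (τ, θ) = deriv (P τ) θ :=
  (hasDerivAt_space (hP _)).deriv.symm

theorem isGowdyWave_uncurry {P : ℝ → ℝ → ℝ} (hsmooth : ContDiff ℝ ∞ (uncurry P))
    (hper : ∀ τ θ, P τ (θ + 2 * π) = P τ θ)
    (hwave : ∀ τ θ, deriv (fun s => deriv (fun s' => P s' θ) s) τ
      = exp (-2 * τ) * deriv (deriv (P τ)) θ) :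
    IsGowdyWave (uncurry P) where
  contDiff := hsmooth
  periodic := fun ⟨τ, θ⟩ => by simpa using hper τ θ
  wave := fun ⟨τ, θ⟩ => by
    have hP : Differentiable ℝ (uncurry P) := hsmooth.differentiable (by simp)
    have hτ := hasDerivAt_time ((contDiff_timeDeriv hsmooth).differentiable (by simp) (τ, θ))
    have hθ := hasDerivAt_space ((contDiff_spaceDeriv hsmooth).differentiable (by simp) (τ, θ))
    simp only [timeDeriv_uncurry hP, spaceDeriv_uncurry hP] at hτ hθ
    rw [← hτ.deriv, ← hθ.deriv]
    exact hwave τ θ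

theorem isGowdyMetric_uncurry {P lam : ℝ → ℝ → ℝ} (hP : IsGowdyWave (uncurry P))
    (hsmooth : ContDiff ℝ ∞ (uncurry lam)) (hper : ∀ τ θ, lam τ (θ + 2 * π) = lam τ θ)
    (htime : ∀ τ θ, deriv (fun s => lam s θ) τ
      = deriv (fun s => P s θ) τ ^ 2 + exp (-2 * τ) * deriv (P τ) θ ^ 2)
    (hspace : ∀ τ θ, deriv (lam τ) θ = 2 * deriv (fun s => P s θ) τ * deriv (P τ) θ) :
    IsGowdyMetric (uncurry P) (uncurry lam) := by
  have hlam : Differentiable ℝ (uncurry lam) := hsmooth.differentiable (by simp)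
  refine ⟨hP, hsmooth, fun ⟨τ, θ⟩ => by simpa using hper τ θ, fun ⟨τ, θ⟩ => ?_, fun ⟨τ, θ⟩ => ?_⟩
  · simpa only [timeDeriv_uncurry hP.differentiable, timeDeriv_uncurry hlam,
      spaceDeriv_uncurry hP.differentiable] using htime τ θ
  · simpa only [timeDeriv_uncurry hP.differentiable, spaceDeriv_uncurry hP.differentiable,
      spaceDeriv_uncurry hlam] using hspace τ θ

end PolarizedGowdy

/-- AVTD behavior of the polarized Gowdy metric function `λ`: if `v` is the asymptotic
velocity of `P`, then `∂τλ → v²` exponentially, and `λ(τ,θ) - v(θ)²τ` converges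
exponentially to a smooth 2π-periodic function `μ`. -/
theorem polarized_gowdy_lambda_avtd
    (P : ℝ → ℝ → ℝ)
    (hsmooth : ContDiff ℝ (⊤ : ℕ∞) (fun p : ℝ × ℝ => P p.1 p.2))
    (hper : ∀ τ θ : ℝ, P τ (θ + 2 * π) = P τ θ)
    (hwave : ∀ τ θ : ℝ, deriv (fun s => deriv (fun s' => P s' θ) s) τ
      = Real.exp (-2 * τ) * deriv (deriv (P τ)) θ)
    (lam : ℝ → ℝ → ℝ)
    (hlsmooth : ContDiff ℝ (⊤ : ℕ∞) (fun p : ℝ × ℝ => lam p.1 p.2))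
    (hlper : ∀ τ θ : ℝ, lam τ (θ + 2 * π) = lam τ θ)
    (hltau : ∀ τ θ : ℝ, deriv (fun s => lam s θ) τ
      = (deriv (fun s => P s θ) τ) ^ 2 + Real.exp (-2 * τ) * (deriv (P τ) θ) ^ 2)
    (hltheta : ∀ τ θ : ℝ, deriv (lam τ) θ = 2 * deriv (fun s => P s θ) τ * deriv (P τ) θ)
    (v : ℝ → ℝ) (hv : ContDiff ℝ (⊤ : ℕ∞) v)
    (C : ℝ) (hC : 0 < C)
    (hvel : ∀ τ : ℝ, 0 ≤ τ → ∀ θ : ℝ,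
      |deriv (fun s => P s θ) τ - v θ| ≤ C * Real.exp (-2 * τ)) :
    ∃ C' : ℝ, 0 < C' ∧
      (∀ τ : ℝ, 0 ≤ τ → ∀ θ : ℝ,
        |deriv (fun s => lam s θ) τ - (v θ) ^ 2| ≤ C' * Real.exp (-2 * τ)) ∧
      ∃ μ : ℝ → ℝ, ContDiff ℝ (⊤ : ℕ∞) μ ∧ (∀ θ : ℝ, μ (θ + 2 * π) = μ θ) ∧
        ∀ τ : ℝ, 0 ≤ τ → ∀ θ : ℝ,
          |lam τ θ - (v θ) ^ 2 * τ - μ θ| ≤ C' * Real.exp (-2 * τ) := by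
  open PolarizedGowdy Function in
  have metric : IsGowdyMetric (uncurry P) (uncurry lam) :=
    isGowdyMetric_uncurry (isGowdyWave_uncurry hsmooth hper hwave) hlsmooth hlper hltau hltheta
  have hlam : Differentiable ℝ (uncurry lam) := hlsmooth.differentiable (by simp)
  have velocity : ExpConverges 2 (timeDeriv (uncurry P)) v := expConverges_iff.2 ⟨C, by
    simpa only [timeDeriv_uncurry metric.differentiable] using hvel⟩
  obtain ⟨c, rfl⟩ := metric.exists_velocity_eq_const velocity
  obtain ⟨C₁, h₁⟩ := expConverges_iff.1 (metric.timeDeriv_lam_expConverges velocity)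
  simp only [timeDeriv_uncurry hlam] at h₁
  obtain ⟨μ, hμ, hμper, hlim⟩ := metric.exists_contDiff_lam_limit velocity
  obtain ⟨C₂, h₂⟩ := expConverges_iff.1 hlim
  have enlarge {K τ x : ℝ} (hK : K ≤ max 1 (max C₁ C₂)) (hx : x ≤ K * exp (-2 * τ)) :
      x ≤ max 1 (max C₁ C₂) * exp (-2 * τ) := hx.trans (by gcongr)
  exact ⟨max 1 (max C₁ C₂), by positivity, fun τ hτ θ => enlarge (by simp) (h₁ τ hτ θ),
    μ, hμ, hμper, fun τ hτ θ => enlarge (by simp) (h₂ τ hτ θ)⟩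
end
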